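/- arXiv:math/0609058 — 4 statements merged into one kernel-verified Lean document; each statement's English description precedes it below -/
import Mathlib

section
/- For every real number ξ, the limit as u → 0⁻ of (1/(2πi)) ∫_{−∞}^{∞} [1/((1+η²)² (ξ + iu − η))] dη exists and equals −i/(4(ξ−i)) − 1/(4(ξ−i)²). -/
open MeasureTheory Complex

/-!
The partial fraction expansion of `1 / (1 + η ^ 2) ^ 2` splits it into a part with its pole at `I`
and a part with its pole at `-I`. At a point `z` of the lower half-plane, the Cauchy integral
reproduces the first part and annihilates the second one; the first part is continuous up to the
real axis.

For a simple pole, `1 / ((η - a) * (z - η))` has a primitive built from logarithms whose branch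
cuts miss the path of integration; higher powers reduce to it because
`1 / ((η - a) * (z - η)) = (1 / (η - a) + 1 / (z - η)) / (z - a)` and `∫ 1 / (η - a) ^ n = 0` for
`n ≥ 2`.
-/

open Filter Topology

lemma ofReal_sub_ne_zero {w : ℂ} (hw : w.im ≠ 0) (t : ℝ) : (t : ℂ) - w ≠ 0 := by
  rw [sub_ne_zero]
  rintro rfl
  exact hw (ofReal_im t)

lemma continuous_inv_ofReal_sub {w : ℂ} (hw : w.im ≠ 0) :
    Continuous fun t : ℝ => ((t : ℂ) - w)⁻¹ :=
  (continuous_ofReal.sub continuous_const).inv₀ (ofReal_sub_ne_zero hw)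

lemma tendsto_inv_ofReal_sub_cobounded (w : ℂ) :
    Tendsto (fun t : ℝ => ((t : ℂ) - w)⁻¹) (Bornology.cobounded ℝ) (𝓝 0) :=
  tendsto_inv₀_cobounded.comp
    ((tendsto_sub_const_cobounded w).comp (RCLike.tendsto_ofReal_cobounded_cobounded ℂ))

lemma norm_inv_ofReal_sub_le {w : ℂ} (hw : w.im ≠ 0) (t : ℝ) : ‖((t : ℂ) - w)⁻¹‖ ≤ |w.im|⁻¹ := by
  rw [norm_inv]
  refine inv_anti₀ (abs_pos.mpr hw) ?_
  simpa using abs_im_le_norm ((t : ℂ) - w)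

lemma norm_inv_ofReal_sub_sq {w : ℂ} (hw : w.im ≠ 0) (t : ℝ) :
    ‖((t : ℂ) - w)⁻¹‖ ^ 2 = (w.im ^ 2)⁻¹ * (1 + ((t - w.re) / w.im) ^ 2)⁻¹ := by
  rw [norm_inv, inv_pow, ← normSq_eq_norm_sq, normSq_apply, ← mul_inv]
  congr 1
  simp only [sub_re, sub_im, ofReal_re, ofReal_im]
  field_simp
  ring

lemma memLp_two_inv_ofReal_sub {w : ℂ} (hw : w.im ≠ 0) :
    MemLp (fun t : ℝ => ((t : ℂ) - w)⁻¹) 2 := by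
  rw [memLp_two_iff_integrable_sq_norm (continuous_inv_ofReal_sub hw).aestronglyMeasurable]
  simp only [norm_inv_ofReal_sub_sq hw]
  exact ((integrable_inv_one_add_sq.comp_div hw).comp_sub_right w.re).const_mul _

lemma integrable_inv_ofReal_sub_mul_inv_ofReal_sub {a b : ℂ} (ha : a.im ≠ 0) (hb : b.im ≠ 0) :
    Integrable fun t : ℝ => ((t : ℂ) - a)⁻¹ * ((t : ℂ) - b)⁻¹ :=
  (memLp_two_inv_ofReal_sub ha).integrable_mul (memLp_two_inv_ofReal_sub hb)

lemma integrable_inv_ofReal_sub_pow {w : ℂ} (hw : w.im ≠ 0) (n : ℕ) :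
    Integrable fun t : ℝ => ((t : ℂ) - w)⁻¹ ^ (n + 2) := by
  have square_integrable : Integrable fun t : ℝ => ((t : ℂ) - w)⁻¹ ^ 2 := by
    simpa only [sq] using integrable_inv_ofReal_sub_mul_inv_ofReal_sub hw hw
  simp only [pow_add]
  refine square_integrable.bdd_mul (c := |w.im|⁻¹ ^ n)
    ((continuous_inv_ofReal_sub hw).pow n).aestronglyMeasurable (ae_of_all _ fun t => ?_)
  rw [norm_pow]
  exact pow_le_pow_left₀ (norm_nonneg _) (norm_inv_ofReal_sub_le hw t) n

lemma hasDerivAt_inv_ofReal_sub_pow {w : ℂ} (hw : w.im ≠ 0) (n : ℕ) (t : ℝ) :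
    HasDerivAt (fun t : ℝ => ((t : ℂ) - w)⁻¹ ^ n) (-n * ((t : ℂ) - w)⁻¹ ^ (n + 1)) t := by
  have h := ((((hasDerivAt_id (t : ℂ)).sub_const w).fun_inv
    (ofReal_sub_ne_zero hw t)).fun_pow n).comp_ofReal
  refine h.congr_deriv ?_
  cases n with
  | zero => simp
  | succ n =>
    simp only [id_eq, add_tsub_cancel_right, neg_div, one_div, ← inv_pow]
    ring

lemma integral_inv_ofReal_sub_pow {w : ℂ} (hw : w.im ≠ 0) (n : ℕ) :
    ∫ t : ℝ, ((t : ℂ) - w)⁻¹ ^ (n + 2) = 0 := by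
  have primitive_tendsto : Tendsto (fun t : ℝ => ((t : ℂ) - w)⁻¹ ^ (n + 1))
      (Bornology.cobounded ℝ) (𝓝 0) := by
    simpa using (tendsto_inv_ofReal_sub_cobounded w).pow (n + 1)
  have h := integral_of_hasDerivAt_of_tendsto (hasDerivAt_inv_ofReal_sub_pow hw (n + 1))
    ((integrable_inv_ofReal_sub_pow hw n).const_mul _)
    (primitive_tendsto.mono_left IsOrderBornology.atBot_le_cobounded)
    (primitive_tendsto.mono_left IsOrderBornology.atTop_le_cobounded)
  rw [integral_const_mul, sub_zero] at h
  exact (mul_eq_zero.mp h).resolve_left (neg_ne_zero.mpr (Nat.cast_ne_zero.mpr n.succ_ne_zero))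

lemma tendsto_log_mul_ofReal_sub_sub_log_atTop {c : ℂ} (hc : c ∈ slitPlane) (w : ℂ) :
    Tendsto (fun t : ℝ => log (c * (t - w)) - Real.log t) atTop (𝓝 (log c)) := by
  have inv_tendsto : Tendsto (fun t : ℝ => ((t⁻¹ : ℝ) : ℂ)) atTop (𝓝 0) := by
    simpa only [Function.comp_def, ofReal_zero] using
      (continuous_ofReal.tendsto 0).comp tendsto_inv_atTop_zero
  have factor_tendsto : Tendsto (fun t : ℝ => c * (1 - w * (t⁻¹ : ℝ))) atTop (𝓝 c) := by
    simpa using ((inv_tendsto.const_mul w).const_sub 1).const_mul c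
  refine (factor_tendsto.clog hc).congr' ?_
  filter_upwards [eventually_gt_atTop 0, factor_tendsto.eventually_ne (slitPlane_ne_zero hc)]
    with t ht factor_ne_zero
  have ht' : (t : ℂ) ≠ 0 := ofReal_ne_zero.mpr ht.ne'
  have factorization : c * (t - w) = t * (c * (1 - w * (t⁻¹ : ℝ))) := by
    push_cast
    field_simp
  rw [factorization, log_ofReal_mul ht factor_ne_zero, add_sub_cancel_left]

lemma tendsto_log_mul_ofReal_sub_sub_log_atBot {c : ℂ} (hc : -c ∈ slitPlane) (w : ℂ) :
    Tendsto (fun t : ℝ => log (c * (t - w)) - Real.log t) atBot (𝓝 (log (-c))) := by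
  refine ((tendsto_log_mul_ofReal_sub_sub_log_atTop hc (-w)).comp tendsto_neg_atBot_atTop).congr
    fun t => ?_
  have reflection : -c * (((-t : ℝ) : ℂ) - -w) = c * (t - w) := by
    push_cast
    ring
  rw [Function.comp_apply, reflection, Real.log_neg_eq_log]

lemma hasDerivAt_log_mul_ofReal_sub {c w : ℂ} {t : ℝ} (h : c * (t - w) ∈ slitPlane) :
    HasDerivAt (fun t : ℝ => log (c * (t - w))) ((t : ℂ) - w)⁻¹ t := by
  have hc : c ≠ 0 := left_ne_zero_of_mul (slitPlane_ne_zero h)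
  refine ((((hasDerivAt_id (t : ℂ)).sub_const w).const_mul c).clog h).comp_ofReal.congr_deriv ?_
  rw [mul_one, id_eq, div_mul_cancel_left₀ hc]

-- The rotation by `±I` moves the line `t - w` into the right half-plane, away from the branch cut.
lemma exists_primitive_inv_ofReal_sub {w : ℂ} (hw : w.im ≠ 0) :
    ∃ L : ℝ → ℂ, (∀ t : ℝ, HasDerivAt L ((t : ℂ) - w)⁻¹ t) ∧
      Tendsto (fun t => L t - Real.log t) atBot (𝓝 (-(w.im.sign * (Real.pi / 2 * I)))) ∧
      Tendsto (fun t => L t - Real.log t) atTop (𝓝 (w.im.sign * (Real.pi / 2 * I))) := by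
  rcases hw.lt_or_gt with hneg | hpos
  · refine ⟨fun t => log (-I * (t - w)), fun t => ?_, ?_, ?_⟩
    · exact hasDerivAt_log_mul_ofReal_sub (by simp [mem_slitPlane_iff, hneg])
    · simpa [Real.sign_of_neg hneg, log_I] using
        tendsto_log_mul_ofReal_sub_sub_log_atBot (c := -I) (by simp [mem_slitPlane_iff]) w
    · simpa [Real.sign_of_neg hneg, log_neg_I] using
        tendsto_log_mul_ofReal_sub_sub_log_atTop (c := -I) (by simp [mem_slitPlane_iff]) w
  · refine ⟨fun t => log (I * (t - w)), fun t => ?_, ?_, ?_⟩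
    · exact hasDerivAt_log_mul_ofReal_sub (by simp [mem_slitPlane_iff, hpos])
    · simpa [Real.sign_of_pos hpos, log_neg_I] using
        tendsto_log_mul_ofReal_sub_sub_log_atBot (c := I) (by simp [mem_slitPlane_iff]) w
    · simpa [Real.sign_of_pos hpos, log_I] using
        tendsto_log_mul_ofReal_sub_sub_log_atTop (c := I) (by simp [mem_slitPlane_iff]) w

lemma sub_mul_integral_inv_ofReal_sub_mul_inv_ofReal_sub {a b : ℂ} (ha : a.im ≠ 0)
    (hb : b.im ≠ 0) :
    (a - b) * ∫ t : ℝ, ((t : ℂ) - a)⁻¹ * ((t : ℂ) - b)⁻¹ =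
      Real.pi * I * (a.im.sign - b.im.sign) := by
  obtain ⟨La, La_deriv, La_bot, La_top⟩ := exists_primitive_inv_ofReal_sub ha
  obtain ⟨Lb, Lb_deriv, Lb_bot, Lb_top⟩ := exists_primitive_inv_ofReal_sub hb
  have La_sub_Lb_deriv (t : ℝ) :
      HasDerivAt (fun t => La t - Lb t) ((a - b) * (((t : ℂ) - a)⁻¹ * ((t : ℂ) - b)⁻¹)) t := by
    refine ((La_deriv t).fun_sub (Lb_deriv t)).congr_deriv ?_
    rw [inv_sub_inv (ofReal_sub_ne_zero ha t) (ofReal_sub_ne_zero hb t), sub_sub_sub_cancel_left,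
      div_eq_mul_inv, mul_inv]
  have bot := La_bot.sub Lb_bot
  have top := La_top.sub Lb_top
  simp only [sub_sub_sub_cancel_right] at bot top
  rw [← integral_const_mul, integral_of_hasDerivAt_of_tendsto La_sub_Lb_deriv
    ((integrable_inv_ofReal_sub_mul_inv_ofReal_sub ha hb).const_mul _) bot top]
  ring

/-- The Cauchy integral `(2πi)⁻¹ ∫ f η / (z - η) dη` over the real line converges absolutely and
has the value `c`. For `z` in the lower half-plane, `c` is `(π⁺ f) z`. -/
def HasCauchyIntegral (f : ℝ → ℂ) (z c : ℂ) : Prop :=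
  Integrable (fun t : ℝ => f t / (z - t)) ∧
    1 / (2 * Real.pi * I) * ∫ t : ℝ, f t / (z - t) = c

namespace HasCauchyIntegral

variable {f g : ℝ → ℂ} {z c d : ℂ}

lemma add (hf : HasCauchyIntegral f z c) (hg : HasCauchyIntegral g z d) :
    HasCauchyIntegral (fun t => f t + g t) z (c + d) := by
  obtain ⟨f_int, rfl⟩ := hf
  obtain ⟨g_int, rfl⟩ := hg
  simp only [HasCauchyIntegral, add_div]
  exact ⟨f_int.add g_int, by rw [integral_add f_int g_int, mul_add]⟩

lemma const_mul (k : ℂ) (hf : HasCauchyIntegral f z c) :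
    HasCauchyIntegral (fun t => k * f t) z (k * c) := by
  obtain ⟨f_int, rfl⟩ := hf
  simp only [HasCauchyIntegral, mul_div_assoc]
  exact ⟨f_int.const_mul k, by rw [integral_const_mul, mul_left_comm]⟩

lemma mul_inv_ofReal_sub {a : ℂ} (hf : HasCauchyIntegral f z c) (ha : a.im ≠ 0) (hz : z.im ≠ 0)
    (hza : z ≠ a) (integrable : Integrable fun t : ℝ => f t * ((t : ℂ) - a)⁻¹)
    (integral_eq_zero : ∫ t : ℝ, f t * ((t : ℂ) - a)⁻¹ = 0) :
    HasCauchyIntegral (fun t => f t * ((t : ℂ) - a)⁻¹) z (c * (z - a)⁻¹) := by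
  obtain ⟨f_int, rfl⟩ := hf
  have partial_fractions (t : ℝ) : f t * ((t : ℂ) - a)⁻¹ / (z - t) =
      (z - a)⁻¹ * (f t * ((t : ℂ) - a)⁻¹ + f t / (z - t)) := by
    have h₁ : z - a ≠ 0 := sub_ne_zero.mpr hza
    have h₂ : (t : ℂ) - a ≠ 0 := ofReal_sub_ne_zero ha t
    have h₃ : z - t ≠ 0 := sub_ne_zero.mpr (sub_ne_zero.mp (ofReal_sub_ne_zero hz t)).symm
    field_simp
    ring
  simp only [HasCauchyIntegral, partial_fractions]
  refine ⟨(integrable.add f_int).const_mul _, ?_⟩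
  rw [integral_const_mul, integral_add integrable f_int, integral_eq_zero]
  ring

end HasCauchyIntegral

lemma hasCauchyIntegral_inv_ofReal_sub {a z : ℂ} (ha : a.im ≠ 0) (hz : z.im ≠ 0) (hza : z ≠ a) :
    HasCauchyIntegral (fun t : ℝ => ((t : ℂ) - a)⁻¹) z
      ((a.im.sign - z.im.sign) / 2 * (z - a)⁻¹) := by
  have div_eq (t : ℝ) : ((t : ℂ) - a)⁻¹ / (z - t) = -(((t : ℂ) - a)⁻¹ * ((t : ℂ) - z)⁻¹) := by
    rw [← neg_sub (t : ℂ) z, div_neg, div_eq_mul_inv]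
  have integral_eq : ∫ t : ℝ, ((t : ℂ) - a)⁻¹ * ((t : ℂ) - z)⁻¹ =
      Real.pi * I * (a.im.sign - z.im.sign) / (a - z) :=
    eq_div_of_mul_eq (sub_ne_zero.mpr hza.symm) <|
      (mul_comm _ _).trans (sub_mul_integral_inv_ofReal_sub_mul_inv_ofReal_sub ha hz)
  simp only [HasCauchyIntegral, div_eq]
  refine ⟨(integrable_inv_ofReal_sub_mul_inv_ofReal_sub ha hz).neg, ?_⟩
  rw [integral_neg, integral_eq, ← div_neg, neg_sub]
  field_simp [Real.pi_ne_zero]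

lemma hasCauchyIntegral_inv_ofReal_sub_pow_self {z : ℂ} (hz : z.im ≠ 0) (n : ℕ) :
    HasCauchyIntegral (fun t : ℝ => ((t : ℂ) - z)⁻¹ ^ (n + 1)) z 0 := by
  have div_eq (t : ℝ) : ((t : ℂ) - z)⁻¹ ^ (n + 1) / (z - t) = -((t : ℂ) - z)⁻¹ ^ (n + 2) := by
    rw [← neg_sub (t : ℂ) z, div_neg, div_eq_mul_inv, ← pow_succ]
  simp only [HasCauchyIntegral, div_eq]
  refine ⟨(integrable_inv_ofReal_sub_pow hz n).neg, ?_⟩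
  rw [integral_neg, integral_inv_ofReal_sub_pow hz, neg_zero, mul_zero]

lemma hasCauchyIntegral_inv_ofReal_sub_pow {a z : ℂ} (ha : a.im ≠ 0) (hz : z.im ≠ 0)
    (hza : z ≠ a) (n : ℕ) :
    HasCauchyIntegral (fun t : ℝ => ((t : ℂ) - a)⁻¹ ^ (n + 1)) z
      ((a.im.sign - z.im.sign) / 2 * (z - a)⁻¹ ^ (n + 1)) := by
  induction n with
  | zero => simpa only [zero_add, pow_one] using hasCauchyIntegral_inv_ofReal_sub ha hz hza
  | succ n ih =>
    simp only [pow_succ _ (n + 1), ← mul_assoc]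
    refine ih.mul_inv_ofReal_sub ha hz hza ?_ ?_
    · simpa only [← pow_succ] using integrable_inv_ofReal_sub_pow ha n
    · simpa only [← pow_succ] using integral_inv_ofReal_sub_pow ha n

lemma hasCauchyIntegral_inv_ofReal_sub_pow_of_im_pos {a z : ℂ} (ha : 0 < a.im) (hz : z.im < 0)
    (n : ℕ) :
    HasCauchyIntegral (fun t : ℝ => ((t : ℂ) - a)⁻¹ ^ (n + 1)) z ((z - a)⁻¹ ^ (n + 1)) := by
  have hza : z ≠ a := by
    rintro rfl
    exact hz.not_gt ha
  convert hasCauchyIntegral_inv_ofReal_sub_pow ha.ne' hz.ne hza n using 1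
  rw [Real.sign_of_pos ha, Real.sign_of_neg hz]
  norm_num

lemma hasCauchyIntegral_inv_ofReal_sub_pow_of_im_neg {a z : ℂ} (ha : a.im < 0) (hz : z.im < 0)
    (n : ℕ) :
    HasCauchyIntegral (fun t : ℝ => ((t : ℂ) - a)⁻¹ ^ (n + 1)) z 0 := by
  rcases eq_or_ne z a with rfl | hza
  · exact hasCauchyIntegral_inv_ofReal_sub_pow_self hz.ne n
  · simpa [Real.sign_of_neg ha, Real.sign_of_neg hz] using
      hasCauchyIntegral_inv_ofReal_sub_pow ha.ne hz.ne hza n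

lemma one_div_one_add_sq_sq_eq {x : ℂ} (hI : x - I ≠ 0) (hnegI : x - -I ≠ 0) :
    1 / (1 + x ^ 2) ^ 2 =
      -I / 4 * (x - I)⁻¹ ^ 1 + -1 / 4 * (x - I)⁻¹ ^ 2 +
        (I / 4 * (x - -I)⁻¹ ^ 1 + -1 / 4 * (x - -I)⁻¹ ^ 2) := by
  have factorization : 1 + x ^ 2 = (x - I) * (x - -I) := by
    linear_combination I_sq
  have simple_fractions :
      (x - I)⁻¹ * (x - -I)⁻¹ = -I / 2 * ((x - I)⁻¹ - (x - -I)⁻¹) := by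
    field_simp
    linear_combination 2 * I_sq
  rw [factorization, one_div, mul_pow, mul_inv, ← inv_pow, ← inv_pow]
  generalize (x - I)⁻¹ = p at simple_fractions ⊢
  generalize (x - -I)⁻¹ = q at simple_fractions ⊢
  linear_combination (p * q - I / 2 * (p - q) + 1 / 2) * simple_fractions +
    (p - q) ^ 2 / 4 * I_sq

lemma hasCauchyIntegral_one_div_one_add_sq_sq {z : ℂ} (hz : z.im < 0) :
    HasCauchyIntegral (fun t : ℝ => 1 / (1 + (t : ℂ) ^ 2) ^ 2) z
      (-I / (4 * (z - I)) - 1 / (4 * (z - I) ^ 2)) := by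
  have I_im_pos : 0 < I.im := by simp
  have neg_I_im_neg : (-I).im < 0 := by simp
  have upper (n : ℕ) := hasCauchyIntegral_inv_ofReal_sub_pow_of_im_pos I_im_pos hz n
  have lower (n : ℕ) := hasCauchyIntegral_inv_ofReal_sub_pow_of_im_neg neg_I_im_neg hz n
  have h := (((upper 0).const_mul (-I / 4)).add ((upper 1).const_mul (-1 / 4))).add
    (((lower 0).const_mul (I / 4)).add ((lower 1).const_mul (-1 / 4)))
  convert h using 1
  · ext t
    exact one_div_one_add_sq_sq_eq (ofReal_sub_ne_zero I_im_pos.ne' t)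
      (ofReal_sub_ne_zero neg_I_im_neg.ne t)
  · simp only [div_eq_mul_inv, mul_inv, inv_pow, zero_add, pow_one, Nat.reduceAdd]
    ring

/-- for every real ξ, the limit as u → 0⁻ of
(1/(2πi)) ∫_{-∞}^{∞} dη / ((1+η²)² (ξ + iu − η)) equals
−i/(4(ξ−i)) − 1/(4(ξ−i)²). -/
theorem pi_plus_one_over_one_plus_sq_sq (ξ : ℝ) :
    Filter.Tendsto
      (fun u : ℝ =>
        (1 / (2 * (Real.pi : ℂ) * I)) *
          ∫ η : ℝ, 1 / ((1 + (η : ℂ) ^ 2) ^ 2 * ((ξ : ℂ) + I * (u : ℂ) - (η : ℂ))))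
      (nhdsWithin 0 (Set.Iio 0))
      (nhds (-I / (4 * ((ξ : ℂ) - I)) - 1 / (4 * ((ξ : ℂ) - I) ^ 2))) := by
  have hξ : (ξ : ℂ) - I ≠ 0 := ofReal_sub_ne_zero (by simp) ξ
  have boundary_continuous :
      ContinuousAt (fun z : ℂ => -I / (4 * (z - I)) - 1 / (4 * (z - I) ^ 2)) ξ := by
    fun_prop (disch := simp [hξ])
  have approach : Tendsto (fun u : ℝ => (ξ : ℂ) + I * u) (𝓝[<] 0) (𝓝 ξ) := by
    have h : Continuous fun u : ℝ => (ξ : ℂ) + I * u := by fun_prop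
    simpa using (h.tendsto 0).mono_left nhdsWithin_le_nhds
  refine (boundary_continuous.tendsto.comp approach).congr' ?_
  filter_upwards [self_mem_nhdsWithin] with u hu
  have hz : ((ξ : ℂ) + I * u).im < 0 := by simpa using hu
  simpa only [div_div] using! (hasCauchyIntegral_one_div_one_add_sq_sq hz).2.symm
end

section
/- For every real number ξ, the limit as u → 0⁻ of (1/(2πi)) ∫_{−∞}^{∞} [η/((1+η²)² (ξ + iu − η))] dη exists and equals −i/(4(ξ−i)²). -/
open MeasureTheory Complex

/-! The partial fraction decomposition `η / (1 + η²)² = ((η - i)⁻² - (η + i)⁻²) / (4i)` splits the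
symbol into a part with its pole in the upper half-plane and a part with its pole in the lower one.
At a point of the lower half-plane the Cauchy integral reproduces the former and annihilates the
latter. For the powers `(η - a)⁻ⁿ` this is seen by induction on `n` with the resolvent identity;
the case `n = 1` is the total change of `log (η - a) - log (η - b)` along the real line. -/

open Filter Topology Bornology

variable {a b z : ℂ} {n : ℕ}

lemma ofReal_sub_mem_slitPlane (ha : a.im ≠ 0) (η : ℝ) : (η : ℂ) - a ∈ slitPlane :=
  mem_slitPlane_iff.2 <| .inr <| by simpa using ha

lemma ofReal_sub_ne_zero_s4 (ha : a.im ≠ 0) (η : ℝ) : (η : ℂ) - a ≠ 0 :=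
  slitPlane_ne_zero (ofReal_sub_mem_slitPlane ha η)

lemma sub_ofReal_ne_zero (ha : a.im ≠ 0) (η : ℝ) : a - η ≠ 0 :=
  sub_ne_zero.2 (sub_ne_zero.1 (ofReal_sub_ne_zero_s4 ha η)).symm

lemma hasDerivAt_ofReal_sub (a : ℂ) (η : ℝ) : HasDerivAt (fun x : ℝ ↦ (x : ℂ) - a) 1 η :=
  (hasDerivAt_id η).ofReal_comp.sub_const a

lemma continuous_inv_ofReal_sub_pow (ha : a.im ≠ 0) (n : ℕ) :
    Continuous fun η : ℝ ↦ (((η : ℂ) - a) ^ n)⁻¹ :=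
  Continuous.inv₀ (by fun_prop) fun η ↦ pow_ne_zero n (ofReal_sub_ne_zero_s4 ha η)

lemma tendsto_ofReal_sub_cobounded (a : ℂ) :
    Tendsto (fun η : ℝ ↦ (η : ℂ) - a) (cobounded ℝ) (cobounded ℂ) :=
  (tendsto_sub_const_cobounded a).comp (RCLike.tendsto_ofReal_cobounded_cobounded ℂ)

lemma tendsto_inv_ofReal_sub_pow_cobounded (a : ℂ) (hn : n ≠ 0) :
    Tendsto (fun η : ℝ ↦ (((η : ℂ) - a) ^ n)⁻¹) (cobounded ℝ) (𝓝 0) := by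
  have h := (tendsto_inv₀_cobounded.comp (tendsto_ofReal_sub_cobounded a)).pow n
  simpa [zero_pow hn, Function.comp_def] using h

lemma one_add_sq_le_mul_norm_ofReal_sub_sq (ha : a.im ≠ 0) (η : ℝ) :
    1 + η ^ 2 ≤ (2 + (1 + 2 * ‖a‖ ^ 2) / a.im ^ 2) * ‖(η : ℂ) - a‖ ^ 2 := by
  have im_le : a.im ^ 2 ≤ ‖(η : ℂ) - a‖ ^ 2 := by
    simpa using sq_le_sq.2 ((abs_im_le_norm ((η : ℂ) - a)).trans (le_abs_self _))
  have sq_le : η ^ 2 ≤ 2 * ‖(η : ℂ) - a‖ ^ 2 + 2 * ‖a‖ ^ 2 := by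
    have h : |η| ≤ ‖(η : ℂ) - a‖ + ‖a‖ := by simpa using norm_add_le ((η : ℂ) - a) a
    nlinarith [sq_abs η, abs_nonneg η, sq_nonneg (‖(η : ℂ) - a‖ - ‖a‖)]
  have scaled : 1 + 2 * ‖a‖ ^ 2 ≤ (1 + 2 * ‖a‖ ^ 2) / a.im ^ 2 * ‖(η : ℂ) - a‖ ^ 2 := by
    rw [div_mul_eq_mul_div, le_div_iff₀ (by positivity)]
    gcongr
  linarith

lemma memLp_two_inv_ofReal_sub_s4 (ha : a.im ≠ 0) :
    MemLp (fun η : ℝ ↦ ((η : ℂ) - a)⁻¹) 2 := by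
  have cont : Continuous fun η : ℝ ↦ ((η : ℂ) - a)⁻¹ := by
    simpa using continuous_inv_ofReal_sub_pow ha 1
  refine (memLp_two_iff_integrable_sq_norm cont.aestronglyMeasurable).2 <|
    (integrable_inv_one_add_sq.const_mul (2 + (1 + 2 * ‖a‖ ^ 2) / a.im ^ 2)).mono'
      (by fun_prop) (ae_of_all _ fun η ↦ ?_)
  have pos : 0 < ‖(η : ℂ) - a‖ ^ 2 := by have := ofReal_sub_ne_zero_s4 ha η; positivity
  rw [norm_inv, inv_pow, Real.norm_of_nonneg (by positivity), ← div_eq_mul_inv,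
    le_div_iff₀ (by positivity), inv_mul_le_iff₀ pos, mul_comm]
  exact one_add_sq_le_mul_norm_ofReal_sub_sq ha η

lemma memLp_top_inv_ofReal_sub_pow (ha : a.im ≠ 0) (n : ℕ) :
    MemLp (fun η : ℝ ↦ (((η : ℂ) - a) ^ n)⁻¹) ⊤ := by
  refine memLp_top_of_bound (continuous_inv_ofReal_sub_pow ha n).aestronglyMeasurable
    ((|a.im| ^ n)⁻¹) (ae_of_all _ fun η ↦ ?_)
  rw [norm_inv, norm_pow]
  gcongr
  simpa using abs_im_le_norm ((η : ℂ) - a)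

lemma memLp_two_inv_ofReal_sub_pow (ha : a.im ≠ 0) (hn : n ≠ 0) :
    MemLp (fun η : ℝ ↦ (((η : ℂ) - a) ^ n)⁻¹) 2 := by
  obtain ⟨m, rfl⟩ := Nat.exists_eq_succ_of_ne_zero hn
  convert (memLp_two_inv_ofReal_sub_s4 ha).mul (r := 2) (memLp_top_inv_ofReal_sub_pow ha m) using 1
  ext η
  simp [pow_succ, mul_comm]

lemma integrable_inv_ofReal_sub_pow_div_sub (ha : a.im ≠ 0) (hb : b.im ≠ 0) (hn : n ≠ 0) :
    Integrable fun η : ℝ ↦ (((η : ℂ) - a) ^ n)⁻¹ / (b - η) := by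
  convert ((memLp_two_inv_ofReal_sub_pow ha hn).integrable_mul
    (memLp_two_inv_ofReal_sub_s4 hb)).neg using 1
  ext η
  simp [div_eq_mul_inv, ← mul_neg, ← inv_neg]

lemma integrable_inv_ofReal_sub_pow_s4 (ha : a.im ≠ 0) (hn : 1 < n) :
    Integrable fun η : ℝ ↦ (((η : ℂ) - a) ^ n)⁻¹ := by
  obtain ⟨m, rfl⟩ : ∃ m, n = m + 2 := ⟨n - 2, by lia⟩
  convert (memLp_two_inv_ofReal_sub_pow ha m.succ_ne_zero).integrable_mul
    (memLp_two_inv_ofReal_sub_s4 ha) using 1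
  ext η
  simp [pow_succ, mul_comm]

lemma integral_inv_ofReal_sub_pow_s4 (ha : a.im ≠ 0) (hn : 1 < n) :
    ∫ η : ℝ, (((η : ℂ) - a) ^ n)⁻¹ = 0 := by
  obtain ⟨m, rfl⟩ : ∃ m, n = m + 2 := ⟨n - 2, by lia⟩
  have hm : (m + 1 : ℂ) ≠ 0 := by exact_mod_cast m.succ_ne_zero
  have deriv (η : ℝ) : HasDerivAt (fun x : ℝ ↦ -(m + 1 : ℂ)⁻¹ * (((x : ℂ) - a) ^ (m + 1))⁻¹)
      (((η : ℂ) - a) ^ (m + 2))⁻¹ η := by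
    have hη := ofReal_sub_ne_zero_s4 ha η
    refine ((((hasDerivAt_ofReal_sub a η).fun_pow (m + 1)).fun_inv
      (pow_ne_zero _ hη)).const_mul (-(m + 1 : ℂ)⁻¹)).congr_deriv ?_
    push_cast
    field_simp
    simp only [← pow_add, ← pow_mul]
    ring
  have lim : Tendsto (fun η : ℝ ↦ -(m + 1 : ℂ)⁻¹ * (((η : ℂ) - a) ^ (m + 1))⁻¹)
      (cobounded ℝ) (𝓝 0) := by
    simpa using (tendsto_inv_ofReal_sub_pow_cobounded a m.succ_ne_zero).const_mul (-(m + 1 : ℂ)⁻¹)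
  simpa using integral_of_hasDerivAt_of_tendsto deriv (integrable_inv_ofReal_sub_pow_s4 ha hn)
    (lim.mono_left IsOrderBornology.atBot_le_cobounded)
    (lim.mono_left IsOrderBornology.atTop_le_cobounded)

lemma log_neg_of_im_ne_zero (hz : z.im ≠ 0) :
    log (-z) = log z - Real.sign z.im * (Real.pi * I) := by
  rcases hz.lt_or_gt with h | h
  · simp only [log, norm_neg, arg_neg_eq_arg_add_pi_of_im_neg h, ofReal_add, Real.sign_of_neg h,
      ofReal_neg, ofReal_one]
    ring
  · simp only [log, norm_neg, arg_neg_eq_arg_sub_pi_of_im_pos h, ofReal_sub, Real.sign_of_pos h,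
      ofReal_one]
    ring

lemma tendsto_log_ofReal_sub_sub_log_atTop (a : ℂ) :
    Tendsto (fun η : ℝ ↦ log (η - a) - Real.log η) atTop (𝓝 0) := by
  have ratio : Tendsto (fun η : ℝ ↦ 1 - a * (η : ℂ)⁻¹) atTop (𝓝 1) := by
    simpa using ((tendsto_inv₀_cobounded.comp
      (RCLike.tendsto_ofReal_atTop_cobounded ℂ)).const_mul a).const_sub 1
  have log_ratio := ratio.clog one_mem_slitPlane
  rw [log_one] at log_ratio
  refine log_ratio.congr' ?_
  filter_upwards [eventually_gt_atTop 0, ratio.eventually_ne one_ne_zero] with η hη hne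
  have factor : (η : ℂ) - a = η * (1 - a * (η : ℂ)⁻¹) := by
    have : (η : ℂ) ≠ 0 := mod_cast hη.ne'
    field_simp
  rw [factor, log_ofReal_mul hη hne, add_sub_cancel_left]

-- `Real.log η` is `log |η|` for negative `η`.
lemma tendsto_log_ofReal_sub_sub_log_atBot (ha : a.im ≠ 0) :
    Tendsto (fun η : ℝ ↦ log (η - a) - Real.log η) atBot
      (𝓝 (-(Real.sign a.im * (Real.pi * I)))) := by
  have h := ((tendsto_log_ofReal_sub_sub_log_atTop (-a)).comp tendsto_neg_atBot_atTop).sub_const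
    (Real.sign a.im * (Real.pi * I))
  rw [zero_sub] at h
  refine h.congr fun η ↦ ?_
  have reflect : (η : ℂ) - a = -(((-η : ℝ) : ℂ) - -a) := by push_cast; ring
  rw [reflect, log_neg_of_im_ne_zero (by simpa using ha)]
  simp only [sub_neg_eq_add, Function.comp_apply, ofReal_neg, Real.log_neg_eq_log, add_im, neg_im,
    ofReal_im, neg_zero, zero_add]
  ring

lemma integral_inv_ofReal_sub_div_sub (ha : a.im ≠ 0) (hb : b.im ≠ 0) (hab : a ≠ b) :
    ∫ η : ℝ, ((η : ℂ) - a)⁻¹ / (b - η) =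
      Real.pi * I * (Real.sign a.im - Real.sign b.im) * (b - a)⁻¹ := by
  have hba : b - a ≠ 0 := sub_ne_zero.2 hab.symm
  -- The terms `Real.log x` cancel; they make each of the two brackets converge at `±∞`.
  have deriv (η : ℝ) : HasDerivAt
      (fun x : ℝ ↦ (log (x - a) - Real.log x - (log (x - b) - Real.log x)) * (b - a)⁻¹)
      (((η : ℂ) - a)⁻¹ / (b - η)) η := by
    simp only [sub_sub_sub_cancel_right]
    refine ((((hasDerivAt_ofReal_sub a η).clog_real (ofReal_sub_mem_slitPlane ha η)).sub
      ((hasDerivAt_ofReal_sub b η).clog_real (ofReal_sub_mem_slitPlane hb η))).mul_const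
      (b - a)⁻¹).congr_deriv ?_
    have hηa := ofReal_sub_ne_zero_s4 ha η
    have hηb := ofReal_sub_ne_zero_s4 hb η
    have hbη := sub_ofReal_ne_zero hb η
    field_simp
    ring
  have integrable : Integrable fun η : ℝ ↦ ((η : ℂ) - a)⁻¹ / (b - η) := by
    simpa using integrable_inv_ofReal_sub_pow_div_sub ha hb one_ne_zero
  rw [integral_of_hasDerivAt_of_tendsto deriv integrable
    (((tendsto_log_ofReal_sub_sub_log_atBot ha).sub
      (tendsto_log_ofReal_sub_sub_log_atBot hb)).mul_const _)
    (((tendsto_log_ofReal_sub_sub_log_atTop a).sub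
      (tendsto_log_ofReal_sub_sub_log_atTop b)).mul_const _)]
  ring

lemma integral_inv_ofReal_sub_pow_div_sub (ha : a.im ≠ 0) (hb : b.im ≠ 0) (hn : n ≠ 0) :
    ∫ η : ℝ, (((η : ℂ) - a) ^ n)⁻¹ / (b - η) =
      Real.pi * I * (Real.sign a.im - Real.sign b.im) * ((b - a) ^ n)⁻¹ := by
  rcases eq_or_ne a b with rfl | hab
  · have pow_succ_eq (η : ℝ) :
        (((η : ℂ) - a) ^ n)⁻¹ / (a - η) = -(((η : ℂ) - a) ^ (n + 1))⁻¹ := by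
      rw [← neg_sub (η : ℂ) a, div_neg, pow_succ, mul_inv, div_eq_mul_inv]
    simp_rw [pow_succ_eq, integral_neg, integral_inv_ofReal_sub_pow_s4 ha (by lia : 1 < n + 1)]
    simp
  induction n, Nat.one_le_iff_ne_zero.2 hn using Nat.le_induction with
  | base => simpa using integral_inv_ofReal_sub_div_sub ha hb hab
  | succ m hm ih =>
    have hba : b - a ≠ 0 := sub_ne_zero.2 hab.symm
    have resolvent (η : ℝ) : (((η : ℂ) - a) ^ (m + 1))⁻¹ / (b - η) =
        ((((η : ℂ) - a) ^ m)⁻¹ / (b - η) + (((η : ℂ) - a) ^ (m + 1))⁻¹) * (b - a)⁻¹ := by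
      have hηa := ofReal_sub_ne_zero_s4 ha η
      have hbη := sub_ofReal_ne_zero hb η
      field_simp
      ring
    have hm₀ : m ≠ 0 := Nat.one_le_iff_ne_zero.1 hm
    have hm₁ : 1 < m + 1 := by lia
    simp_rw [resolvent]
    rw [integral_mul_const, integral_add (integrable_inv_ofReal_sub_pow_div_sub ha hb hm₀)
      (integrable_inv_ofReal_sub_pow_s4 ha hm₁), ih hm₀, integral_inv_ofReal_sub_pow_s4 ha hm₁,
      add_zero, pow_succ, mul_inv, mul_assoc]

/-- The Cauchy transform of a function on the real line, normalised so that its boundary values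
from the lower half-plane are the projection `π⁺` of Boutet de Monvel's calculus. -/
noncomputable def cauchyTransform (f : ℝ → ℂ) (z : ℂ) : ℂ :=
  1 / (2 * (Real.pi : ℂ) * I) * ∫ η : ℝ, f η / (z - η)

lemma cauchyTransform_inv_sub_pow (ha : a.im ≠ 0) (hz : z.im ≠ 0) (hn : n ≠ 0) :
    cauchyTransform (fun η ↦ (((η : ℂ) - a) ^ n)⁻¹) z =
      (Real.sign a.im - Real.sign z.im) / 2 * ((z - a) ^ n)⁻¹ := by
  rw [cauchyTransform, integral_inv_ofReal_sub_pow_div_sub ha hz hn]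
  have := I_ne_zero
  have : (Real.pi : ℂ) ≠ 0 := mod_cast Real.pi_ne_zero
  field_simp

lemma cauchyTransform_inv_sub_pow_of_im_pos (ha : 0 < a.im) (hz : z.im < 0) (hn : n ≠ 0) :
    cauchyTransform (fun η ↦ (((η : ℂ) - a) ^ n)⁻¹) z = ((z - a) ^ n)⁻¹ := by
  rw [cauchyTransform_inv_sub_pow ha.ne' hz.ne hn, Real.sign_of_pos ha, Real.sign_of_neg hz]
  norm_num

lemma cauchyTransform_inv_sub_pow_of_im_neg (ha : a.im < 0) (hz : z.im < 0) (hn : n ≠ 0) :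
    cauchyTransform (fun η ↦ (((η : ℂ) - a) ^ n)⁻¹) z = 0 := by
  rw [cauchyTransform_inv_sub_pow ha.ne hz.ne hn, Real.sign_of_neg ha, Real.sign_of_neg hz]
  simp

lemma cauchyTransform_const_mul (c : ℂ) (f : ℝ → ℂ) (z : ℂ) :
    cauchyTransform (fun η ↦ c * f η) z = c * cauchyTransform f z := by
  simp_rw [cauchyTransform, mul_div_assoc, integral_const_mul]
  ring

lemma cauchyTransform_sub {f g : ℝ → ℂ} (hf : Integrable fun η : ℝ ↦ f η / (z - η))
    (hg : Integrable fun η : ℝ ↦ g η / (z - η)) :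
    cauchyTransform (fun η ↦ f η - g η) z = cauchyTransform f z - cauchyTransform g z := by
  simp_rw [cauchyTransform, sub_div, integral_sub hf hg, mul_sub]

lemma div_one_add_sq_sq_eq_inv_sub_inv (η : ℝ) :
    (η : ℂ) / (1 + (η : ℂ) ^ 2) ^ 2 =
      -I / 4 * ((((η : ℂ) - I) ^ 2)⁻¹ - (((η : ℂ) - -I) ^ 2)⁻¹) := by
  have h₁ : (η : ℂ) - I ≠ 0 := ofReal_sub_ne_zero_s4 (by simp) η
  have h₂ : (η : ℂ) - -I ≠ 0 := ofReal_sub_ne_zero_s4 (by simp) η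
  have factor : 1 + (η : ℂ) ^ 2 = (η - I) * (η - -I) := by linear_combination I_sq
  rw [factor]
  field_simp
  linear_combination (4 * (η : ℂ)) * I_sq

lemma cauchyTransform_div_one_add_sq_sq (hz : z.im < 0) :
    cauchyTransform (fun η ↦ (η : ℂ) / (1 + (η : ℂ) ^ 2) ^ 2) z = -I / (4 * (z - I) ^ 2) := by
  have hI : 0 < I.im := by simp
  have hI' : (-I).im < 0 := by simp
  simp_rw [div_one_add_sq_sq_eq_inv_sub_inv]
  rw [cauchyTransform_const_mul, cauchyTransform_sub
    (integrable_inv_ofReal_sub_pow_div_sub hI.ne' hz.ne two_ne_zero)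
    (integrable_inv_ofReal_sub_pow_div_sub hI'.ne hz.ne two_ne_zero),
    cauchyTransform_inv_sub_pow_of_im_pos hI hz two_ne_zero,
    cauchyTransform_inv_sub_pow_of_im_neg hI' hz two_ne_zero, sub_zero, ← div_eq_mul_inv, div_div]

/-- for every real ξ, the limit as u → 0⁻ of
(1/(2πi)) ∫_{-∞}^{∞} η dη / ((1+η²)² (ξ + iu − η)) equals −i/(4(ξ−i)²). -/
theorem pi_plus_eta_over_one_plus_sq_sq (ξ : ℝ) :
    Filter.Tendsto
      (fun u : ℝ =>
        (1 / (2 * (Real.pi : ℂ) * I)) *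
          ∫ η : ℝ, (η : ℂ) / ((1 + (η : ℂ) ^ 2) ^ 2 * ((ξ : ℂ) + I * (u : ℂ) - (η : ℂ))))
      (nhdsWithin 0 (Set.Iio 0))
      (nhds (-I / (4 * ((ξ : ℂ) - I) ^ 2))) := by
  have hξ : (ξ : ℂ) - I ≠ 0 := ofReal_sub_ne_zero_s4 (by simp) ξ
  have cont : ContinuousAt (fun u : ℝ ↦ -I / (4 * ((ξ : ℂ) + I * (u : ℂ) - I) ^ 2)) 0 :=
    ContinuousAt.div (by fun_prop) (by fun_prop) (by simpa using hξ)
  have lim := cont.tendsto.mono_left (nhdsWithin_le_nhds (s := Set.Iio 0))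
  simp only [ofReal_zero, mul_zero, add_zero] at lim
  refine lim.congr' ?_
  filter_upwards [self_mem_nhdsWithin] with u hu
  rw [← cauchyTransform_div_one_add_sq_sq (by simpa using hu)]
  simp_rw [cauchyTransform, div_div]
end

section
/- Let A be an associative unital algebra over ℂ and τ : A → ℂ a ℂ-linear functional satisfying τ(xy) = τ(yx) for all x, y ∈ A and τ(1) = 4. Let u, v ∈ A satisfy u² = v² = −1 and uv + vu = 0. Then for every real number ξ, τ( [ iu/(4(ξ−i)) + (u+iv)/(4(ξ−i)²) ] · [ (6ξv + 2u)/(1+ξ²)² − 8ξ²(u + ξv)/(1+ξ²)³ ] ) = −4 · (−2iξ² − ξ + i) / ((ξ−i)⁴(ξ+i)³). -/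
open Complex

/-!
Since `u` and `v` anticommute, `τ (u * v) = τ (v * u)` forces both to vanish, so `τ` of a product of
two combinations of `u` and `v` is diagonal. With `i` for `I` and `z` for `ξ`, the two factors are
`(4 (z - i)²)⁻¹ ((i z + 2) u + i v)` and `((1 + z²)³)⁻¹ ((2 - 6 z²) u + (6 z - 2 z³) v)`. The
diagonal sum of their coefficients is divisible by `4 (z - i)`, which cancels against
`4 (z - i)² (1 + z²)³ = 4 (z - i)⁵ (z + i)³`.
-/

section Trace

variable {R A : Type*} [CommRing R] [NoZeroDivisors R] [NeZero (2 : R)] [Ring A] [Algebra R A]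
  {u v : A}

theorem map_mul_eq_zero_of_anticommute (τ : A →ₗ[R] R) (hτ : τ (u * v) = τ (v * u))
    (huv : u * v + v * u = 0) : τ (u * v) = 0 := by
  have two_mul_map : 2 * τ (u * v) = 0 := calc
    2 * τ (u * v) = τ (u * v) + τ (v * u) := by rw [← hτ, two_mul]
    _ = 0 := by rw [← map_add, huv, map_zero]
  exact (mul_eq_zero_iff_left two_ne_zero).mp two_mul_map

theorem map_smul_add_smul_mul_of_anticommute (τ : A →ₗ[R] R) (hτ : τ (u * v) = τ (v * u))
    (huv : u * v + v * u = 0) (a b c d : R) :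
    τ ((a • u + b • v) * (c • u + d • v)) = a * c * τ (u ^ 2) + b * d * τ (v ^ 2) := by
  have map_uv : τ (u * v) = 0 := map_mul_eq_zero_of_anticommute τ hτ huv
  have map_vu : τ (v * u) = 0 := hτ ▸ map_uv
  simp only [add_mul, mul_add, smul_mul_smul_comm, map_add, map_smul, smul_eq_mul, ← pow_two,
    map_uv, map_vu]
  ring

end Trace

section Coefficients

variable {R : Type*} [CommRing R] {i : R}

theorem one_add_sq_eq_sub_mul_add (hi : i ^ 2 = -1) (z : R) :
    1 + z ^ 2 = (z - i) * (z + i) := by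
  linear_combination hi

theorem diagonal_sum_eq_four_mul_sub_mul (hi : i ^ 2 = -1) (z : R) :
    (i * z + 2) * (2 - 6 * z ^ 2) + i * (6 * z - 2 * z ^ 3)
      = 4 * (z - i) * (-2 * i * z ^ 2 - z + i) := by
  linear_combination (4 - 8 * z ^ 2) * hi

end Coefficients

section Factors

variable {K M : Type*} [Field K] [AddCommGroup M] [Module K M] {i z : K}

theorem first_factor_over_common_denominator (hi : i ^ 2 = -1) (hz : z - i ≠ 0) (u v : M) :
    (i / (4 * (z - i))) • u + (1 / (4 * (z - i) ^ 2)) • (u + i • v)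
      = (1 / (4 * (z - i) ^ 2)) • ((i * z + 2) • u + i • v) := by
  have numerator_eq : i * z + 2 = i * (z - i) + 1 := by linear_combination hi
  rw [numerator_eq]
  match_scalars <;> field_simp

theorem second_factor_over_common_denominator (hz : 1 + z ^ 2 ≠ 0) (u v : M) :
    (6 * z / (1 + z ^ 2) ^ 2) • v + (2 / (1 + z ^ 2) ^ 2) • u
        - (8 * z ^ 2 / (1 + z ^ 2) ^ 3) • (u + z • v)
      = (1 / (1 + z ^ 2) ^ 3) • ((2 - 6 * z ^ 2) • u + (6 * z - 2 * z ^ 3) • v) := by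
  match_scalars <;> field_simp <;> ring

end Factors

theorem trace_identity_2_25_general {K A : Type*} [Field K] [NeZero (2 : K)] [Ring A] [Algebra K A]
    {u v : A} (τ : A →ₗ[K] K) (hτ : τ (u * v) = τ (v * u))
    (hu : u ^ 2 = -1) (hv : v ^ 2 = -1) (huv : u * v + v * u = 0)
    {i z : K} (hi : i ^ 2 = -1) (hz : 1 + z ^ 2 ≠ 0) :
    τ (((i / (4 * (z - i))) • u + (1 / (4 * (z - i) ^ 2)) • (u + i • v)) *
       ((6 * z / (1 + z ^ 2) ^ 2) • v + (2 / (1 + z ^ 2) ^ 2) • u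
        - (8 * z ^ 2 / (1 + z ^ 2) ^ 3) • (u + z • v)))
      = -τ 1 * (-2 * i * z ^ 2 - z + i) / ((z - i) ^ 4 * (z + i) ^ 3) := by
  have factorization := one_add_sq_eq_sub_mul_add hi z
  obtain ⟨hz_sub, hz_add⟩ := mul_ne_zero_iff.mp (factorization ▸ hz)
  have four_ne : (4 : K) ≠ 0 := by
    rw [← two_add_two_eq_four, ← two_mul]
    exact mul_ne_zero two_ne_zero two_ne_zero
  rw [first_factor_over_common_denominator hi hz_sub, second_factor_over_common_denominator hz,
    smul_mul_smul_comm, map_smul, smul_eq_mul, map_smul_add_smul_mul_of_anticommute τ hτ huv,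
    hu, hv, map_neg, ← add_mul, diagonal_sum_eq_four_mul_sub_mul hi, factorization]
  field_simp

/-- trace identity (2.25). -/
theorem trace_identity_2_25 (A : Type*) [Ring A] [Algebra ℂ A]
    (τ : A →ₗ[ℂ] ℂ) (hτ : ∀ x y : A, τ (x * y) = τ (y * x)) (hτ1 : τ 1 = 4)
    (u v : A) (hu : u ^ 2 = -1) (hv : v ^ 2 = -1) (huv : u * v + v * u = 0)
    (ξ : ℝ) :
    τ (((I / (4 * ((ξ : ℂ) - I))) • u
        + (1 / (4 * ((ξ : ℂ) - I) ^ 2)) • (u + I • v)) *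
       ((6 * (ξ : ℂ) / (1 + (ξ : ℂ) ^ 2) ^ 2) • v
        + (2 / (1 + (ξ : ℂ) ^ 2) ^ 2) • u
        - (8 * (ξ : ℂ) ^ 2 / (1 + (ξ : ℂ) ^ 2) ^ 3) • (u + (ξ : ℂ) • v)))
    = -4 * (-2 * I * (ξ : ℂ) ^ 2 - (ξ : ℂ) + I)
        / (((ξ : ℂ) - I) ^ 4 * ((ξ : ℂ) + I) ^ 3) := by
  have one_add_sq_ne_zero : 1 + (ξ : ℂ) ^ 2 ≠ 0 := by
    exact_mod_cast (show 1 + ξ ^ 2 ≠ 0 by positivity)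
  simpa only [hτ1] using trace_identity_2_25_general τ (hτ u v) hu hv huv I_sq one_add_sq_ne_zero
end

section
/- Let A be an associative unital algebra over ℂ and τ : A → ℂ a ℂ-linear functional satisfying τ(xy) = τ(yx) for all x, y ∈ A and τ(1) = 4. Let u, v ∈ A satisfy u² = v² = −1 and uv + vu = 0, let w ∈ A and a ∈ ℝ satisfy τ(uw) = −2a and τ(vw) = 0, and set p₀ = −(3a/4) v. Then for every real number ξ, τ( [ (u+iv)/(2(ξ−i)) ] · [ (1/(1+ξ²)³)( (2ξ−2ξ³) v p₀ v + (1−3ξ²) v p₀ u + (1−3ξ²) u p₀ v − 4ξ u p₀ u + (3ξ²−1) w − 4ξ u v w + 2a u + 2aξ v ) + 6ξ a (u+ξv) v (u+ξv) / (1+ξ²)⁴ ] ) = 3a(iξ² + ξ − 2i) / ((ξ−i)³(ξ+i)³) + 12a i ξ / ((ξ−i)³(ξ+i)⁴). -/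
open Complex

/-!
For the null vector `n = u + i v`, the relations `n v = i n u` and `n u v = i n` make left
multiplication by `n` collapse every Clifford word in `u` and `v` to a multiple of `n u` or of `n`,
and `u v w` to `i n w`. The coefficients that appear carry powers of `ξ - i`, which cancel against
`1 + ξ² = (ξ - i)(ξ + i)`. Only `τ(n u) = -4` and `τ(n w) = -2a` are left to evaluate.
-/

/-- An orthonormal pair under Clifford multiplication, with the sign convention `c(e)² = -|e|²`;
it models `c(ξ′)` and `c(dxₙ)` at the boundary point. -/
structure IsCliffordPair {A : Type*} [Ring A] (u v : A) : Prop where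
  sq_left : u ^ 2 = -1
  sq_right : v ^ 2 = -1
  anticomm : u * v + v * u = 0

namespace IsCliffordPair

section Relations

variable {A : Type*} [Ring A] {u v : A}

theorem left_mul_self (h : IsCliffordPair u v) : u * u = -1 := by
  rw [← sq, h.sq_left]

theorem right_mul_self (h : IsCliffordPair u v) : v * v = -1 := by
  rw [← sq, h.sq_right]

theorem right_mul_left (h : IsCliffordPair u v) : v * u = -(u * v) :=
  eq_neg_of_add_eq_zero_right h.anticomm

end Relations

section NullVector

variable {K A : Type*} [CommRing K] [Ring A] [Algebra K A] {u v : A} {i : K}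

theorem null_mul_right (h : IsCliffordPair u v) (hi : i ^ 2 = -1) :
    (u + i • v) * v = i • ((u + i • v) * u) := by
  simp only [add_mul, smul_mul_assoc, h.left_mul_self, h.right_mul_self, h.right_mul_left,
    smul_add, smul_smul, ← sq, hi]
  module

theorem null_mul_left_mul_right (h : IsCliffordPair u v) (hi : i ^ 2 = -1) :
    (u + i • v) * u * v = i • (u + i • v) := by
  have left_term : u * u * v = -v := by rw [h.left_mul_self, neg_one_mul]
  have right_term : v * u * v = u := by
    rw [h.right_mul_left, neg_mul, mul_assoc, h.right_mul_self, mul_neg_one, neg_neg]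
  rw [add_mul, add_mul, smul_mul_assoc, smul_mul_assoc, left_term, right_term, smul_add,
    smul_smul, ← sq, hi]
  module

theorem null_mul_symbol (h : IsCliffordPair u v) (hi : i ^ 2 = -1) (ξ : K) :
    (u + i • v) * (u + ξ • v) = (i * (ξ - i)) • ((u + i • v) * u) := by
  have coeff : i * (ξ - i) = 1 + ξ * i := by linear_combination -hi
  rw [mul_add, mul_smul_comm, h.null_mul_right hi, coeff]
  module

theorem null_mul_symbol_mul_right_mul_symbol (h : IsCliffordPair u v) (hi : i ^ 2 = -1) (ξ : K) :
    (u + i • v) * ((u + ξ • v) * v * (u + ξ • v)) =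
      (-i * (ξ - i) ^ 2) • ((u + i • v) * u) := by
  have coeff : -i * (ξ - i) ^ 2 = i * (ξ - i) * i * (i * (ξ - i)) := by
    linear_combination -i * (ξ - i) ^ 2 * hi
  rw [← mul_assoc, ← mul_assoc, h.null_mul_symbol hi, smul_mul_assoc, smul_mul_assoc,
    h.null_mul_left_mul_right hi, smul_mul_assoc, h.null_mul_symbol hi, smul_smul, smul_smul, coeff]

-- The coefficients come from the numerator of `∂_ξ ((u + ξv) v (u + ξv) / (1 + ξ²)²)`, which
-- multiplication by `n` turns into `∂_ξ (-i / (ξ + i)²) = 2i / (ξ + i)³` times `n u`.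
theorem null_mul_deriv_sandwich (h : IsCliffordPair u v) (hi : i ^ 2 = -1) (ξ : K) :
    (u + i • v) * ((2 * ξ - 2 * ξ ^ 3) • (v * v * v) + (1 - 3 * ξ ^ 2) • (v * v * u)
        + (1 - 3 * ξ ^ 2) • (u * v * v) - (4 * ξ) • (u * v * u)) =
      (2 * i * (ξ - i) ^ 3) • ((u + i • v) * u) := by
  have word_uvv : u * v * v = -u := by rw [mul_assoc, h.right_mul_self, mul_neg_one]
  have word_uvu : u * v * u = v := by
    rw [mul_assoc, h.right_mul_left, mul_neg, ← mul_assoc, h.left_mul_self, neg_one_mul, neg_neg]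
  have coeff : 2 * i * (ξ - i) ^ 3 =
      -(2 * (1 - 3 * ξ ^ 2)) - ((2 * ξ - 2 * ξ ^ 3) + 4 * ξ) * i := by
    linear_combination (-6 * ξ ^ 2 + 6 * i * ξ - 2 * i ^ 2 + 2) * hi
  simp only [h.right_mul_self, word_uvv, word_uvu, neg_one_mul, mul_sub, mul_add, mul_neg,
    mul_smul_comm, h.null_mul_right hi, coeff]
  module

theorem null_mul_sub_mul_mul (h : IsCliffordPair u v) (hi : i ^ 2 = -1) (w : A) (ξ : K) :
    (u + i • v) * ((3 * ξ ^ 2 - 1) • w - (4 * ξ) • (u * v * w)) =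
      ((3 * ξ - i) * (ξ - i)) • ((u + i • v) * w) := by
  have coeff : (3 * ξ - i) * (ξ - i) = 3 * ξ ^ 2 - 1 - 4 * ξ * i := by linear_combination hi
  have collapse : (u + i • v) * (u * v * w) = i • ((u + i • v) * w) := by
    rw [← mul_assoc, ← mul_assoc, h.null_mul_left_mul_right hi, smul_mul_assoc]
  rw [mul_sub, mul_smul_comm, mul_smul_comm, collapse, smul_smul, coeff, ← sub_smul]

theorem null_mul_numerator (h : IsCliffordPair u v) (hi : i ^ 2 = -1) (w : A) (a b ξ : K) :
    (u + i • v) *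
        ((2 * ξ - 2 * ξ ^ 3) • (v * (b • v) * v)
          + (1 - 3 * ξ ^ 2) • (v * (b • v) * u)
          + (1 - 3 * ξ ^ 2) • (u * (b • v) * v)
          - (4 * ξ) • (u * (b • v) * u)
          + (3 * ξ ^ 2 - 1) • w
          - (4 * ξ) • (u * v * w)
          + (2 * a) • u
          + (2 * a * ξ) • v) =
      (2 * i * b * (ξ - i) ^ 3 + 2 * a * i * (ξ - i)) • ((u + i • v) * u)
        + ((3 * ξ - i) * (ξ - i)) • ((u + i • v) * w) := by
  calc
    _ = b • ((u + i • v) * ((2 * ξ - 2 * ξ ^ 3) • (v * v * v) + (1 - 3 * ξ ^ 2) • (v * v * u)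
            + (1 - 3 * ξ ^ 2) • (u * v * v) - (4 * ξ) • (u * v * u)))
          + (u + i • v) * ((3 * ξ ^ 2 - 1) • w - (4 * ξ) • (u * v * w))
          + (2 * a) • ((u + i • v) * (u + ξ • v)) := by
      simp only [← mul_smul_comm, ← mul_add]
      congr 1
      simp only [mul_smul_comm, smul_mul_assoc]
      module
    _ = _ := by
      rw [h.null_mul_deriv_sandwich hi, h.null_mul_sub_mul_mul hi, h.null_mul_symbol hi]
      module

end NullVector

section Trace

variable {K A : Type*} [CommRing K] [Ring A] [Algebra K A] {u v : A} {τ : A →ₗ[K] K}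

theorem trace_mul_eq_zero [NoZeroDivisors K] (h : IsCliffordPair u v) (h2 : (2 : K) ≠ 0)
    (hτ : τ (u * v) = τ (v * u)) : τ (u * v) = 0 := by
  rw [h.right_mul_left, map_neg] at hτ
  have double : 2 * τ (u * v) = 0 := by linear_combination hτ
  exact (mul_eq_zero.mp double).resolve_left h2

theorem trace_null_mul_left (h : IsCliffordPair u v) (hτuv : τ (u * v) = 0) (i : K) :
    τ ((u + i • v) * u) = -τ 1 := by
  rw [add_mul, smul_mul_assoc, h.left_mul_self, h.right_mul_left, map_add, map_smul, map_neg,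
    map_neg, hτuv, neg_zero, smul_zero, add_zero]

end Trace

end IsCliffordPair

theorem trace_identity_2_46_general {K A : Type*} [Field K] [Ring A] [Algebra K A]
    (h2 : (2 : K) ≠ 0) {i : K} (hi : i ^ 2 = -1)
    {τ : A →ₗ[K] K} (hτ1 : τ 1 = 4)
    {u v : A} (h : IsCliffordPair u v) (hτ : τ (u * v) = τ (v * u))
    {w : A} {a : K} (huw : τ (u * w) = -2 * a) (hvw : τ (v * w) = 0)
    {p₀ : A} (hp₀ : p₀ = (-(3 * a / 4)) • v)
    {ξ : K} (hξ : 1 + ξ ^ 2 ≠ 0) :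
    τ (((1 / (2 * (ξ - i))) • (u + i • v)) *
       ((1 / (1 + ξ ^ 2) ^ 3) •
          ((2 * ξ - 2 * ξ ^ 3) • (v * p₀ * v)
            + (1 - 3 * ξ ^ 2) • (v * p₀ * u)
            + (1 - 3 * ξ ^ 2) • (u * p₀ * v)
            - (4 * ξ) • (u * p₀ * u)
            + (3 * ξ ^ 2 - 1) • w
            - (4 * ξ) • (u * v * w)
            + (2 * a) • u
            + (2 * a * ξ) • v)
        + (6 * ξ * a / (1 + ξ ^ 2) ^ 4) •
            ((u + ξ • v) * v * (u + ξ • v))))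
    = 3 * a * (i * ξ ^ 2 + ξ - 2 * i) / ((ξ - i) ^ 3 * (ξ + i) ^ 3)
      + 12 * a * i * ξ / ((ξ - i) ^ 3 * (ξ + i) ^ 4) := by
  have factor : 1 + ξ ^ 2 = (ξ - i) * (ξ + i) := by linear_combination hi
  have ⟨hm, hp⟩ : ξ - i ≠ 0 ∧ ξ + i ≠ 0 := mul_ne_zero_iff.mp (factor ▸ hξ)
  have trace_nu : τ ((u + i • v) * u) = -4 := by
    rw [h.trace_null_mul_left (h.trace_mul_eq_zero h2 hτ), hτ1]
  have trace_nw : τ ((u + i • v) * w) = -2 * a := by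
    rw [add_mul, smul_mul_assoc, map_add, map_smul, huw, hvw, smul_zero, add_zero]
  have numerator : (2 * i * -(3 * a / 4) * (ξ - i) ^ 3 + 2 * a * i * (ξ - i)) * -4
        + (3 * ξ - i) * (ξ - i) * (-2 * a) = 6 * a * (ξ - i) * (i * ξ ^ 2 + ξ - 2 * i) := by
    have h4 : (4 : K) * (3 * a / 4) = 3 * a :=
      mul_div_cancel₀ _ (by simpa [show (4 : K) = 2 ^ 2 by norm_num] using h2)
    linear_combination 2 * i * (ξ - i) ^ 3 * h4 + 6 * a * (ξ - i) * (i - 2 * ξ) * hi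
  rw [smul_mul_assoc, mul_add, mul_smul_comm, mul_smul_comm, hp₀, h.null_mul_numerator hi,
    h.null_mul_symbol_mul_right_mul_symbol hi]
  simp only [map_add, map_smul, smul_eq_mul, trace_nu, trace_nw, numerator, factor]
  field_simp
  ring

/-- trace identity (2.46). -/
theorem trace_identity_2_46 (A : Type*) [Ring A] [Algebra ℂ A]
    (τ : A →ₗ[ℂ] ℂ) (hτ : ∀ x y : A, τ (x * y) = τ (y * x)) (hτ1 : τ 1 = 4)
    (u v : A) (hu : u ^ 2 = -1) (hv : v ^ 2 = -1) (huv : u * v + v * u = 0)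
    (w : A) (a : ℝ) (huw : τ (u * w) = -2 * (a : ℂ)) (hvw : τ (v * w) = 0)
    (p₀ : A) (hp₀ : p₀ = (-(3 * (a : ℂ) / 4)) • v)
    (ξ : ℝ) :
    τ (((1 / (2 * ((ξ : ℂ) - I))) • (u + I • v)) *
       ((1 / (1 + (ξ : ℂ) ^ 2) ^ 3) •
          ((2 * (ξ : ℂ) - 2 * (ξ : ℂ) ^ 3) • (v * p₀ * v)
            + (1 - 3 * (ξ : ℂ) ^ 2) • (v * p₀ * u)
            + (1 - 3 * (ξ : ℂ) ^ 2) • (u * p₀ * v)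
            - (4 * (ξ : ℂ)) • (u * p₀ * u)
            + (3 * (ξ : ℂ) ^ 2 - 1) • w
            - (4 * (ξ : ℂ)) • (u * v * w)
            + (2 * (a : ℂ)) • u
            + (2 * (a : ℂ) * (ξ : ℂ)) • v)
        + (6 * (ξ : ℂ) * (a : ℂ) / (1 + (ξ : ℂ) ^ 2) ^ 4) •
            ((u + (ξ : ℂ) • v) * v * (u + (ξ : ℂ) • v))))
    = 3 * (a : ℂ) * (I * (ξ : ℂ) ^ 2 + (ξ : ℂ) - 2 * I)
        / (((ξ : ℂ) - I) ^ 3 * ((ξ : ℂ) + I) ^ 3)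
      + 12 * (a : ℂ) * I * (ξ : ℂ)
        / (((ξ : ℂ) - I) ^ 3 * ((ξ : ℂ) + I) ^ 4) := by
  have hξ : 1 + (ξ : ℂ) ^ 2 ≠ 0 := by exact_mod_cast (by positivity : 1 + ξ ^ 2 ≠ 0)
  exact trace_identity_2_46_general two_ne_zero I_sq hτ1 ⟨hu, hv, huv⟩ (hτ u v) huw hvw hp₀ hξ
end
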